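/- arXiv:1801.08778 — 2 statements merged into one kernel-verified Lean document; each statement's English description precedes it below -/
import Mathlib

section
/- Let k ≥ 1 and let L satisfy |p_{k−1}| + 1 ≤ L ≤ 2|p_{k−1}| − |p_{k−2}|. If a_{k−1} ∈ A_{k+1}, then the growth of the complexity exceeds by at least one the bound of the previous proposition: C(L+1) − C(L) ≥ #A_k whenever additionally L ≤ |p_k| − |p_{k−1}| − 1, and in any case C(L+1) − C(L) ≥ #A_{k+1}. -/
open Filter

/-- The blocks `p k` of the simple Toeplitz subshift coded by `a` and `n`:
`p 0 = a 0 ^ (n 0 - 1)` and `p (k+1)` consists of `n (k+1)` copies of `p k`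
separated by `n (k+1) - 1` single letters `a (k+1)`. -/
def ToeplitzBlock {A : Type*} (a : ℕ → A) (n : ℕ → ℕ) : ℕ → List A
  | 0 => List.replicate (n 0 - 1) (a 0)
  | k + 1 => List.intercalate [a (k + 1)] (List.replicate (n (k + 1)) (ToeplitzBlock a n k))

/-- `lenPrev a n k = |p (k-1)|`, with the convention `|p (-1)| = 0`. -/
def lenPrev {A : Type*} (a : ℕ → A) (n : ℕ → ℕ) : ℕ → ℕ
  | 0 => 0
  | k + 1 => (ToeplitzBlock a n k).length

/-- The language of the simple Toeplitz subshift: all finite words occurring as a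
factor of some block `p k`. -/
def ToeplitzLang {A : Type*} (a : ℕ → A) (n : ℕ → ℕ) : Set (List A) :=
  {u | ∃ k, u <:+: ToeplitzBlock a n k}

/-- The complexity function `C L`. -/
noncomputable def cmpl {A : Type*} (a : ℕ → A) (n : ℕ → ℕ) (L : ℕ) : ℕ :=
  Set.ncard {u | u ∈ ToeplitzLang a n ∧ u.length = L}

/-- The palindrome complexity function `P L`. -/
noncomputable def palCmpl {A : Type*} (a : ℕ → A) (n : ℕ → ℕ) (L : ℕ) : ℕ :=
  Set.ncard {u | u ∈ ToeplitzLang a n ∧ u.length = L ∧ u.reverse = u}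

/-- `Ak a k = {a j : j ≥ k}`. -/
def Ak {A : Type*} (a : ℕ → A) (k : ℕ) : Set A := {x | ∃ j, k ≤ j ∧ a j = x}

/-- The eventual alphabet `A_ev = ⋂ k, A_k`. -/
def Aev {A : Type*} (a : ℕ → A) : Set A := ⋂ k, Ak a k

/-- `Kf a k = min {j > k : {a (k+1), …, a j} = A (k+1)}`. -/
noncomputable def Kf {A : Type*} (a : ℕ → A) (k : ℕ) : ℕ :=
  sInf {j | k < j ∧ {x | ∃ i, k + 1 ≤ i ∧ i ≤ j ∧ a i = x} = Ak a (k + 1)}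

/-- The positions `m i` at which `Kf` increases: `m 0 = 0` and
`m (i+1) = min {j > m i : Kf j > Kf (m i)}`. -/
noncomputable def mseq {A : Type*} (a : ℕ → A) : ℕ → ℕ
  | 0 => 0
  | i + 1 => sInf {j | mseq a i < j ∧ Kf a (mseq a i) < Kf a j}

/-- The repetitivity function `R L`: the least `L'` such that every word of
length `L` of the language is a factor of every word of length `L'`. -/
noncomputable def repet {A : Type*} (a : ℕ → A) (n : ℕ → ℕ) (L : ℕ) : ℕ :=
  sInf {L' | ∀ u ∈ ToeplitzLang a n, u.length = L →
    ∀ w ∈ ToeplitzLang a n, w.length = L' → u <:+: w}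

/-!
Each word of length `L` has at least one right extension, and `C (L+1) - C L` is the sum over these
words of the number of right extensions minus one. So two distinct words of length `L` suffice, one
with at least `#A_k` (or `#A_{k+1}`) right extensions and one with at least two.

The first is a suffix of `p_k`: since `p_k x p_k` occurs for every `x ∈ A_{k+1}`, all of `A_{k+1}`
can follow it, and if it still lies in `p_k` after removal of a final `a_k p_{k-1}`, so can `a_k`.

For the second, `p_k a_{k-1} p_k` occurs because `a_{k-1} ∈ A_{k+1}`, and it contains
`p_{k-1} a_{k-1} p_{k-1} a_k`. The word `p_{k-1} a_{k-1} p_{k-1}` consists of copies of `p_{k-2}`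
separated by `a_{k-1}`, so removing its first or its last period leaves the same word, which can
therefore be followed by both `a_{k-1}` and `a_k`. It ends in `a_{k-1} p_{k-1}`, whereas `p_k` ends
in `a_k p_{k-1}`, so the suffixes of length `L > |p_{k-1}|` of the two words differ.
-/

namespace SimpleToeplitz

variable {A : Type*}

/-! ### Affixes of words -/

section Affix

variable {L : ℕ} {s u v w : List A}

theorem append_infix_append {u' v' : List A} (hu : u <:+ u') (hv : v <+: v') :
    u ++ v <:+: u' ++ v' := by
  obtain ⟨s, rfl⟩ := hu
  obtain ⟨t, rfl⟩ := hv
  exact ⟨s, t, by simp only [List.append_assoc]⟩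

theorem length_rtake_of_le (h : L ≤ u.length) : (u.rtake L).length = L := by
  rw [List.rtake, List.length_drop, Nat.sub_sub_self h]

theorem suffix_rtake_of_length_le (h : s <:+ u) (hL : s.length ≤ L) : s <:+ u.rtake L := by
  refine List.suffix_of_suffix_length_le h (List.drop_suffix _ u) ?_
  have hlen : s.length ≤ u.length := h.length_le
  rw [List.rtake, List.length_drop]
  omega

theorem rtake_ne_rtake_of_cons_suffix {x y : A} (hxy : x ≠ y) (hu : x :: w <:+ u)
    (hv : y :: w <:+ v) (hL : w.length + 1 ≤ L) : u.rtake L ≠ v.rtake L := by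
  intro huv
  have hx : x :: w <:+ v.rtake L := huv ▸ suffix_rtake_of_length_le hu hL
  have hy : y :: w <:+ v.rtake L := suffix_rtake_of_length_le hv hL
  have hcons : x :: w = y :: w :=
    (List.suffix_of_suffix_length_le hx hy le_rfl).eq_of_length rfl
  exact hxy (List.cons.inj hcons).1

end Affix

/-! ### Right extensions and the growth of the complexity -/

section Language

variable {𝓛 : Set (List A)} {L : ℕ} {s u v w : List A}

/-- The words of length `L` of a language; `cmpl` counts those of `ToeplitzLang`. -/
def wordsOfLength (𝓛 : Set (List A)) (L : ℕ) : Set (List A) := {u | u ∈ 𝓛 ∧ u.length = L}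

/-- The right extensions of a word `u` in a language: the letters `x` such that `ux` belongs
to it. A right special word is one with at least two right extensions. -/
def rightExt (𝓛 : Set (List A)) (u : List A) : Set A := {x | u ++ [x] ∈ 𝓛}

/-- A language is factorial if it contains every factor of each of its words. -/
def IsFactorial (𝓛 : Set (List A)) : Prop := ∀ ⦃u v⦄, u <:+: v → v ∈ 𝓛 → u ∈ 𝓛

/-- A language is right extendable if each of its words is followed by some letter, so that the
complexity does not decrease. -/
def IsRightExtendable (𝓛 : Set (List A)) : Prop := ∀ u ∈ 𝓛, (rightExt 𝓛 u).Nonempty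

theorem mem_rightExt {x : A} : x ∈ rightExt 𝓛 u ↔ u ++ [x] ∈ 𝓛 := Iff.rfl

theorem IsFactorial.rightExt_subset_of_suffix (h𝓛 : IsFactorial 𝓛) (h : u <:+ v) :
    rightExt 𝓛 v ⊆ rightExt 𝓛 u := fun _ hx ↦
  h𝓛 (append_infix_append h List.prefix_rfl) hx

theorem finite_rightExt (hfin : ∀ L, (wordsOfLength 𝓛 L).Finite) (u : List A) :
    (rightExt 𝓛 u).Finite := by
  have append_injective : Function.Injective fun x ↦ u ++ [x] := fun x y h ↦ by simpa using h
  exact ((hfin (u.length + 1)).preimage append_injective.injOn).subset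
    fun _ hx ↦ ⟨hx, List.length_append⟩

theorem IsFactorial.mapsTo_dropLast (h𝓛 : IsFactorial 𝓛) (L : ℕ) :
    Set.MapsTo List.dropLast (wordsOfLength 𝓛 (L + 1)) (wordsOfLength 𝓛 L) := fun u hu ↦
  ⟨h𝓛 (List.dropLast_prefix u).isInfix hu.1, by rw [List.length_dropLast, hu.2, Nat.add_sub_cancel]⟩

theorem ncard_dropLast_fiber (hu : u.length = L) :
    {v ∈ wordsOfLength 𝓛 (L + 1) | v.dropLast = u}.ncard = (rightExt 𝓛 u).ncard := by
  have fiber_eq : {v ∈ wordsOfLength 𝓛 (L + 1) | v.dropLast = u} =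
      (fun x ↦ u ++ [x]) '' rightExt 𝓛 u := by
    ext v
    constructor
    · rintro ⟨⟨hv, hlen⟩, rfl⟩
      have hne : v ≠ [] := List.ne_nil_of_length_eq_add_one hlen
      have hv_eq : v.dropLast ++ [v.getLast hne] = v := List.dropLast_append_getLast hne
      exact ⟨v.getLast hne, mem_rightExt.2 (by rwa [hv_eq]), hv_eq⟩
    · rintro ⟨x, hx, rfl⟩
      exact ⟨⟨hx, by simp [hu]⟩, by simp⟩
  rw [fiber_eq, Set.ncard_image_of_injective _ fun x y h ↦ by simpa using h]

theorem IsFactorial.ncard_wordsOfLength_succ (h𝓛 : IsFactorial 𝓛)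
    (hfin : ∀ L, (wordsOfLength 𝓛 L).Finite) (L : ℕ) :
    (wordsOfLength 𝓛 (L + 1)).ncard = ∑ u ∈ (hfin L).toFinset, (rightExt 𝓛 u).ncard := by
  classical
  rw [Set.ncard_eq_toFinset_card _ (hfin (L + 1)),
    Finset.card_eq_sum_card_fiberwise (f := List.dropLast) (t := (hfin L).toFinset)
      (by simpa only [Set.Finite.coe_toFinset] using h𝓛.mapsTo_dropLast L)]
  refine Finset.sum_congr rfl fun u hu ↦ ?_
  rw [← ncard_dropLast_fiber ((hfin L).mem_toFinset.1 hu).2, ← Set.ncard_coe_finset,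
    Finset.coe_filter]
  simp only [Set.Finite.mem_toFinset]

theorem IsFactorial.ncard_rightExt_add_le_growth (h𝓛 : IsFactorial 𝓛)
    (hext : IsRightExtendable 𝓛) (hfin : ∀ L, (wordsOfLength 𝓛 L).Finite)
    (hs : s ∈ wordsOfLength 𝓛 L) (hw : w ∈ wordsOfLength 𝓛 L) (hsw : s ≠ w) :
    ((rightExt 𝓛 s).ncard - 1 : ℤ) + ((rightExt 𝓛 w).ncard - 1) ≤
      (wordsOfLength 𝓛 (L + 1)).ncard - (wordsOfLength 𝓛 L).ncard := by
  classical
  have one_le_ncard (u) (hu : u ∈ (hfin L).toFinset) : 1 ≤ (rightExt 𝓛 u).ncard :=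
    (Set.ncard_pos (finite_rightExt hfin u)).2 (hext u ((hfin L).mem_toFinset.1 hu).1)
  have pair_subset : {s, w} ⊆ (hfin L).toFinset := by
    rw [Finset.insert_subset_iff, Finset.singleton_subset_iff]
    exact ⟨(hfin L).mem_toFinset.2 hs, (hfin L).mem_toFinset.2 hw⟩
  calc ((rightExt 𝓛 s).ncard - 1 : ℤ) + ((rightExt 𝓛 w).ncard - 1)
    _ = ∑ u ∈ {s, w}, ((rightExt 𝓛 u).ncard - 1 : ℤ) :=
        (Finset.sum_pair (f := fun u ↦ ((rightExt 𝓛 u).ncard - 1 : ℤ)) hsw).symm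
    _ ≤ ∑ u ∈ (hfin L).toFinset, ((rightExt 𝓛 u).ncard - 1 : ℤ) :=
        Finset.sum_le_sum_of_subset_of_nonneg pair_subset fun u hu _ ↦
          sub_nonneg.2 (mod_cast one_le_ncard u hu)
    _ = (wordsOfLength 𝓛 (L + 1)).ncard - (wordsOfLength 𝓛 L).ncard := by
        rw [h𝓛.ncard_wordsOfLength_succ hfin, Set.ncard_eq_toFinset_card _ (hfin L),
          Finset.sum_sub_distrib, Finset.sum_const, nsmul_one, Nat.cast_sum]

theorem IsFactorial.ncard_rightExt_add_le_growth_of_le_length (h𝓛 : IsFactorial 𝓛)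
    (hext : IsRightExtendable 𝓛) (hfin : ∀ L, (wordsOfLength 𝓛 L).Finite)
    (hu : u ∈ 𝓛) (hv : v ∈ 𝓛) (hLu : L ≤ u.length) (hLv : L ≤ v.length)
    (huv : u.rtake L ≠ v.rtake L) :
    ((rightExt 𝓛 u).ncard - 1 : ℤ) + ((rightExt 𝓛 v).ncard - 1) ≤
      (wordsOfLength 𝓛 (L + 1)).ncard - (wordsOfLength 𝓛 L).ncard := by
  have rtake_mem {w} (hw : w ∈ 𝓛) (hLw : L ≤ w.length) : w.rtake L ∈ wordsOfLength 𝓛 L :=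
    ⟨h𝓛 (List.drop_suffix _ w).isInfix hw, length_rtake_of_le hLw⟩
  have ncard_le (w) : (rightExt 𝓛 w).ncard ≤ (rightExt 𝓛 (w.rtake L)).ncard :=
    Set.ncard_le_ncard (h𝓛.rightExt_subset_of_suffix (List.drop_suffix _ w))
      (finite_rightExt hfin _)
  have hgrowth := h𝓛.ncard_rightExt_add_le_growth hext hfin (rtake_mem hu hLu)
    (rtake_mem hv hLv) huv
  have hu_le := ncard_le u
  have hv_le := ncard_le v
  omega

end Language

/-! ### Copies of a word separated by a letter -/

section Intercalate

theorem intercalate_replicate_nil (x : A) (m : ℕ) :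
    [x].intercalate (List.replicate m []) = List.replicate (m - 1) x := by
  induction m with
  | zero => rfl
  | succ m ih =>
    cases m with
    | zero => rfl
    | succ m =>
      rw [List.replicate_succ, List.replicate_succ, List.intercalate_cons_cons,
        ← List.replicate_succ, ih]
      rfl

theorem intercalate_replicate_add_two (x : A) (p : List A) (m : ℕ) :
    [x].intercalate (List.replicate (m + 2) p) =
      p ++ x :: [x].intercalate (List.replicate (m + 1) p) := by
  simp [List.replicate_succ]

theorem intercalate_replicate_add_two' (x : A) (p : List A) (m : ℕ) :
    [x].intercalate (List.replicate (m + 2) p) =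
      [x].intercalate (List.replicate (m + 1) p) ++ x :: p := by
  induction m with
  | zero => simp [List.replicate_succ]
  | succ m ih =>
    rw [intercalate_replicate_add_two, ih, ← List.cons_append, ← List.append_assoc,
      ← intercalate_replicate_add_two, ih]

theorem prefix_intercalate_replicate (x : A) (p : List A) (m : ℕ) :
    p <+: [x].intercalate (List.replicate (m + 1) p) := by
  cases m with
  | zero => simp
  | succ m => exact intercalate_replicate_add_two x p m ▸ List.prefix_append _ _

theorem eq_or_mem_of_mem_intercalate_replicate {x y : A} {p : List A} {m : ℕ}
    (hy : y ∈ [x].intercalate (List.replicate m p)) : y = x ∨ y ∈ p := by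
  induction m with
  | zero => simp at hy
  | succ m ih =>
    cases m with
    | zero => exact .inr (by simpa using hy)
    | succ m =>
      rw [intercalate_replicate_add_two, List.mem_append, List.mem_cons] at hy
      rcases hy with hp | rfl | hrest
      exacts [.inr hp, .inl rfl, ih hrest]

end Intercalate

/-! ### The blocks -/

section Block

variable {a : ℕ → A} {n : ℕ → ℕ} {k : ℕ}

/-- The block `p (k-1)`, where `p (-1)` is the empty word. -/
def prevBlock (a : ℕ → A) (n : ℕ → ℕ) : ℕ → List A
  | 0 => []
  | k + 1 => ToeplitzBlock a n k

/-- The block `p k` with one copy of `p (k-1)` and one separator removed, at either end. -/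
def shortBlock (a : ℕ → A) (n : ℕ → ℕ) (k : ℕ) : List A :=
  [a k].intercalate (List.replicate (n k - 1) (prevBlock a n k))

/-- The word `p k a_k p k` with one copy of `p (k-1)` and one separator removed, at either end.
It is followed both by `a_k` and by `a_{k+1}` if `a_k` reappears after `a_{k+1}`. -/
def specialWord (a : ℕ → A) (n : ℕ → ℕ) (k : ℕ) : List A :=
  shortBlock a n k ++ a k :: ToeplitzBlock a n k

theorem length_prevBlock (a : ℕ → A) (n : ℕ → ℕ) (k : ℕ) :
    (prevBlock a n k).length = lenPrev a n k := by
  cases k <;> rfl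

theorem block_eq_intercalate (a : ℕ → A) (n : ℕ → ℕ) (k : ℕ) :
    ToeplitzBlock a n k = [a k].intercalate (List.replicate (n k) (prevBlock a n k)) := by
  cases k with
  | zero => rw [ToeplitzBlock, prevBlock, intercalate_replicate_nil]
  | succ k => rfl

theorem block_eq_prevBlock_append (hn : 2 ≤ n k) :
    ToeplitzBlock a n k = prevBlock a n k ++ a k :: shortBlock a n k := by
  obtain ⟨m, hm⟩ := Nat.exists_eq_add_of_le' hn
  rw [block_eq_intercalate, shortBlock, hm, intercalate_replicate_add_two]
  rfl

theorem block_eq_append_prevBlock (hn : 2 ≤ n k) :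
    ToeplitzBlock a n k = shortBlock a n k ++ a k :: prevBlock a n k := by
  obtain ⟨m, hm⟩ := Nat.exists_eq_add_of_le' hn
  rw [block_eq_intercalate, shortBlock, hm, intercalate_replicate_add_two']
  rfl

theorem prevBlock_prefix_shortBlock (hn : 2 ≤ n k) :
    prevBlock a n k <+: shortBlock a n k := by
  obtain ⟨m, hm⟩ := Nat.exists_eq_add_of_le' hn
  rw [shortBlock, hm]
  exact prefix_intercalate_replicate _ _ m

theorem shortBlock_suffix_block (hn : 2 ≤ n k) :
    shortBlock a n k <:+ ToeplitzBlock a n k :=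
  block_eq_prevBlock_append hn ▸ (List.suffix_cons _ _).trans (List.suffix_append _ _)

theorem cons_block_suffix_block_succ (hn : 2 ≤ n (k + 1)) :
    a (k + 1) :: ToeplitzBlock a n k <:+ ToeplitzBlock a n (k + 1) :=
  block_eq_append_prevBlock hn ▸ List.suffix_append _ _

theorem block_append_prefix_block_succ (hn : 2 ≤ n (k + 1)) :
    ToeplitzBlock a n k ++ [a (k + 1)] <+: ToeplitzBlock a n (k + 1) := by
  rw [block_eq_prevBlock_append hn, prevBlock, List.prefix_append_right_inj]
  exact List.prefix_append [a (k + 1)] _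

theorem block_prefix_block (hn : ∀ k, 2 ≤ n k) {m : ℕ} (h : k ≤ m) :
    ToeplitzBlock a n k <+: ToeplitzBlock a n m := by
  induction m, h using Nat.le_induction with
  | base => exact List.prefix_rfl
  | succ m _ ih =>
    exact ih.trans ((List.prefix_append _ _).trans (block_append_prefix_block_succ (hn (m + 1))))

theorem block_suffix_block (hn : ∀ k, 2 ≤ n k) {m : ℕ} (h : k ≤ m) :
    ToeplitzBlock a n k <:+ ToeplitzBlock a n m := by
  induction m, h using Nat.le_induction with
  | base => exact List.suffix_rfl
  | succ m _ ih =>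
    exact ih.trans ((List.suffix_cons _ _).trans (cons_block_suffix_block_succ (hn (m + 1))))

theorem length_block (hn : 2 ≤ n k) :
    (ToeplitzBlock a n k).length = (shortBlock a n k).length + lenPrev a n k + 1 := by
  rw [block_eq_append_prevBlock hn, List.length_append, List.length_cons, length_prevBlock,
    add_assoc]

theorem two_mul_length_block_lt (hn : 2 ≤ n (k + 1)) :
    2 * (ToeplitzBlock a n k).length < (ToeplitzBlock a n (k + 1)).length := by
  have hlen := length_block (a := a) hn
  have hshort := (prevBlock_prefix_shortBlock (a := a) hn).length_le
  rw [length_prevBlock] at hshort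
  rw [lenPrev] at hlen hshort
  omega

theorem length_specialWord (hn : 2 ≤ n k) :
    (specialWord a n k).length + lenPrev a n k = 2 * (ToeplitzBlock a n k).length := by
  have hlen := length_block (a := a) hn
  rw [specialWord, List.length_append, List.length_cons]
  omega

theorem specialWord_append (hn : 2 ≤ n k) :
    specialWord a n k ++ a k :: prevBlock a n k =
      ToeplitzBlock a n k ++ a k :: ToeplitzBlock a n k := by
  calc specialWord a n k ++ a k :: prevBlock a n k
    _ = shortBlock a n k ++ a k :: (prevBlock a n k ++ a k :: shortBlock a n k) ++
          a k :: prevBlock a n k := by rw [specialWord, block_eq_prevBlock_append hn]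
    _ = (shortBlock a n k ++ a k :: prevBlock a n k) ++
          a k :: (shortBlock a n k ++ a k :: prevBlock a n k) := by
        simp only [List.append_assoc, List.cons_append]
    _ = ToeplitzBlock a n k ++ a k :: ToeplitzBlock a n k := by
        rw [← block_eq_append_prevBlock hn]

theorem append_specialWord (hn : 2 ≤ n k) :
    prevBlock a n k ++ a k :: specialWord a n k =
      ToeplitzBlock a n k ++ a k :: ToeplitzBlock a n k := by
  rw [specialWord, ← List.cons_append, ← List.append_assoc, ← block_eq_prevBlock_append hn]

theorem mem_range_of_mem_block {x : A} (hx : x ∈ ToeplitzBlock a n k) :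
    x ∈ Set.range a := by
  induction k with
  | zero => exact ⟨0, (List.eq_of_mem_replicate hx).symm⟩
  | succ k ih =>
    rcases eq_or_mem_of_mem_intercalate_replicate hx with rfl | hx
    exacts [⟨k + 1, rfl⟩, ih hx]

end Block

/-! ### The language and its right special words -/

section ToeplitzLang

variable {a : ℕ → A} {n : ℕ → ℕ} {k L : ℕ}

theorem isFactorial_toeplitzLang (a : ℕ → A) (n : ℕ → ℕ) : IsFactorial (ToeplitzLang a n) :=
  fun _ _ huv ⟨k, hk⟩ ↦ ⟨k, huv.trans hk⟩

theorem finite_wordsOfLength_toeplitzLang (hrange : (Set.range a).Finite) (L : ℕ) :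
    (wordsOfLength (ToeplitzLang a n) L).Finite := by
  have : Finite (Set.range a) := hrange.to_subtype
  refine ((List.finite_length_eq (Set.range a) L).image (List.map (↑))).subset ?_
  rintro u ⟨⟨k, hk⟩, hlen⟩
  have hu : u ∈ Set.range (List.map ((↑) : Set.range a → A)) := by
    rw [Set.range_list_map_coe]
    exact fun x hx ↦ mem_range_of_mem_block (hk.mem hx)
  obtain ⟨u, rfl⟩ := hu
  exact ⟨u, by simpa using hlen, rfl⟩

theorem Ak_eq_insert (a : ℕ → A) (k : ℕ) : Ak a k = insert (a k) (Ak a (k + 1)) := by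
  ext x
  constructor
  · rintro ⟨j, hj, rfl⟩
    rcases hj.eq_or_lt with rfl | hj
    exacts [.inl rfl, .inr ⟨j, hj, rfl⟩]
  · rintro (rfl | ⟨j, hj, rfl⟩)
    exacts [⟨k, le_rfl, rfl⟩, ⟨j, (Nat.le_succ k).trans hj, rfl⟩]

theorem block_append_cons_block_mem (hn : ∀ k, 2 ≤ n k) {x : A} (hx : x ∈ Ak a (k + 1)) :
    ToeplitzBlock a n k ++ x :: ToeplitzBlock a n k ∈ ToeplitzLang a n := by
  obtain ⟨j, hj, rfl⟩ := hx
  obtain ⟨m, rfl⟩ := Nat.exists_eq_add_of_le' (Nat.one_le_of_lt hj)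
  have hkm : k ≤ m := Nat.le_of_lt_succ hj
  refine ⟨m + 1, ?_⟩
  rw [block_eq_prevBlock_append (hn (m + 1))]
  refine append_infix_append (block_suffix_block hn hkm) (List.prefix_cons_inj _ |>.2 ?_)
  exact (block_prefix_block hn hkm).trans (prevBlock_prefix_shortBlock (hn (m + 1)))

theorem isRightExtendable_toeplitzLang (hn : ∀ k, 2 ≤ n k) :
    IsRightExtendable (ToeplitzLang a n) := by
  rintro u ⟨k, s, t, hst⟩
  have hmem : s ++ u ++ (t ++ a (k + 1) :: ToeplitzBlock a n k) ∈ ToeplitzLang a n := by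
    rw [← List.append_assoc, hst]
    exact block_append_cons_block_mem hn ⟨k + 1, le_rfl, rfl⟩
  obtain ⟨y, r, hr⟩ := List.exists_cons_of_ne_nil
    (List.append_ne_nil_of_right_ne_nil t (List.cons_ne_nil (a (k + 1)) (ToeplitzBlock a n k)))
  exact ⟨y, isFactorial_toeplitzLang a n ⟨s, r, by simp⟩ (hr ▸ hmem)⟩

theorem Ak_succ_subset_rightExt_block (hn : ∀ k, 2 ≤ n k) (k : ℕ) :
    Ak a (k + 1) ⊆ rightExt (ToeplitzLang a n) (ToeplitzBlock a n k) := fun x hx ↦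
  isFactorial_toeplitzLang a n
    (append_infix_append List.suffix_rfl (List.prefix_append [x] _))
    (block_append_cons_block_mem hn hx)

theorem Ak_subset_rightExt_shortBlock (hn : ∀ k, 2 ≤ n k) (k : ℕ) :
    Ak a k ⊆ rightExt (ToeplitzLang a n) (shortBlock a n k) := by
  rw [Ak_eq_insert, Set.insert_subset_iff]
  constructor
  · exact ⟨k, [], prevBlock a n k, by simp [block_eq_append_prevBlock (hn k)]⟩
  · exact (Ak_succ_subset_rightExt_block hn k).trans
      ((isFactorial_toeplitzLang a n).rightExt_subset_of_suffix (shortBlock_suffix_block (hn k)))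

theorem pair_subset_rightExt_specialWord (hn : ∀ k, 2 ≤ n k) (hmem : a k ∈ Ak a (k + 2)) :
    {a k, a (k + 1)} ⊆ rightExt (ToeplitzLang a n) (specialWord a n k) := by
  have hlang : ToeplitzBlock a n k ++ a k :: (ToeplitzBlock a n k ++ [a (k + 1)]) ∈
      ToeplitzLang a n :=
    isFactorial_toeplitzLang a n
      (append_infix_append (block_suffix_block hn k.le_succ)
        (List.prefix_cons_inj _ |>.2 (block_append_prefix_block_succ (hn (k + 1)))))
      (block_append_cons_block_mem hn hmem)
  rw [← List.cons_append, ← List.append_assoc] at hlang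
  rintro x (rfl | rfl)
  · rw [← specialWord_append (hn k)] at hlang
    exact isFactorial_toeplitzLang a n
      ⟨[], prevBlock a n k ++ [a (k + 1)], by simp⟩ hlang
  · rw [← append_specialWord (hn k)] at hlang
    exact isFactorial_toeplitzLang a n ⟨prevBlock a n k ++ [a k], [], by simp⟩ hlang

theorem two_le_ncard_rightExt_specialWord (hrange : (Set.range a).Finite) (hn : ∀ k, 2 ≤ n k)
    (hak : a k ≠ a (k + 1)) (hmem : a k ∈ Ak a (k + 2)) :
    2 ≤ (rightExt (ToeplitzLang a n) (specialWord a n k)).ncard :=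
  Set.ncard_pair hak ▸ Set.ncard_le_ncard (pair_subset_rightExt_specialWord hn hmem)
    (finite_rightExt (finite_wordsOfLength_toeplitzLang hrange) _)

theorem specialWord_mem (hn : ∀ k, 2 ≤ n k) (hmem : a k ∈ Ak a (k + 2)) :
    specialWord a n k ∈ ToeplitzLang a n :=
  isFactorial_toeplitzLang a n List.infix_append_left
    (pair_subset_rightExt_specialWord hn hmem (Set.mem_insert _ _))

theorem ncard_rightExt_le_growth (hrange : (Set.range a).Finite) (hn : ∀ k, 2 ≤ n k)
    (hak : a k ≠ a (k + 1)) (hmem : a k ∈ Ak a (k + 2))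
    (hL1 : lenPrev a n (k + 1) + 1 ≤ L) (hL2 : L + lenPrev a n k ≤ 2 * lenPrev a n (k + 1))
    {u : List A} (hu : u <:+ ToeplitzBlock a n (k + 1)) (hLu : L ≤ u.length) :
    ((rightExt (ToeplitzLang a n) u).ncard : ℤ) ≤ cmpl a n (L + 1) - cmpl a n L := by
  have hLv : L ≤ (specialWord a n k).length := by
    rw [lenPrev, ← length_specialWord (hn k)] at hL2
    exact Nat.le_of_add_le_add_right hL2
  have suffix_u : a (k + 1) :: ToeplitzBlock a n k <:+ u :=
    List.suffix_of_suffix_length_le (cons_block_suffix_block_succ (hn (k + 1))) hu (hL1.trans hLu)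
  have suffix_special : a k :: ToeplitzBlock a n k <:+ specialWord a n k :=
    List.suffix_append _ _
  have hgrowth := (isFactorial_toeplitzLang a n).ncard_rightExt_add_le_growth_of_le_length
    (isRightExtendable_toeplitzLang hn) (finite_wordsOfLength_toeplitzLang hrange)
    ⟨k + 1, hu.isInfix⟩ (specialWord_mem hn hmem) hLu hLv
    (rtake_ne_rtake_of_cons_suffix hak.symm suffix_u suffix_special hL1)
  have special_ncard := two_le_ncard_rightExt_specialWord hrange hn hak hmem
  rw [cmpl, cmpl]
  simp only [wordsOfLength] at hgrowth
  omega

end ToeplitzLang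

end SimpleToeplitz

open SimpleToeplitz in
theorem stmt4_general {A : Type*} {a : ℕ → A} {n : ℕ → ℕ} (hrange : (Set.range a).Finite)
    (hn : ∀ k, 2 ≤ n k) {k L : ℕ} (hak : a k ≠ a (k + 1))
    (hL1 : lenPrev a n (k + 1) + 1 ≤ L)
    (hL2 : L + lenPrev a n k ≤ 2 * lenPrev a n (k + 1))
    (hmem : a k ∈ Ak a (k + 2)) :
    (L + lenPrev a n (k + 1) + 1 ≤ (ToeplitzBlock a n (k + 1)).length →
      ((Ak a (k + 1)).ncard : ℤ) ≤ cmpl a n (L + 1) - cmpl a n L) ∧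
    ((Ak a (k + 2)).ncard : ℤ) ≤ cmpl a n (L + 1) - cmpl a n L := by
  have ncard_le_growth {B : Set A} {u : List A} (hB : B ⊆ rightExt (ToeplitzLang a n) u)
      (hu : u <:+ ToeplitzBlock a n (k + 1)) (hLu : L ≤ u.length) :
      (B.ncard : ℤ) ≤ cmpl a n (L + 1) - cmpl a n L :=
    (Nat.cast_le.2 (Set.ncard_le_ncard hB
      (finite_rightExt (finite_wordsOfLength_toeplitzLang hrange) u))).trans
      (ncard_rightExt_le_growth hrange hn hak hmem hL1 hL2 hu hLu)
  constructor
  · intro hL3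
    rw [length_block (hn (k + 1))] at hL3
    exact ncard_le_growth (Ak_subset_rightExt_shortBlock hn (k + 1))
      (shortBlock_suffix_block (hn (k + 1))) (by omega)
  · have hLp : L ≤ (ToeplitzBlock a n (k + 1)).length := by
      have hlt := two_mul_length_block_lt (a := a) (hn (k + 1))
      rw [lenPrev] at hL2
      omega
    exact ncard_le_growth (Ak_succ_subset_rightExt_block hn (k + 1)) List.suffix_rfl hLp

/-- for `k ≥ 1`, `|p (k-1)| + 1 ≤ L ≤ 2|p (k-1)| - |p (k-2)|` and
`a (k-1) ∈ A (k+1)`, the growth of the complexity exceeds the bound of the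
previous proposition by at least one. -/
theorem stmt4 {A : Type*} [Fintype A] [Nonempty A]
    (a : ℕ → A) (n : ℕ → ℕ) (hn : ∀ k, 2 ≤ n k) (ha : ∀ k, a k ≠ a (k + 1))
    (hAev : 2 ≤ (Aev a).ncard)
    (k : ℕ) (hk : 1 ≤ k) (L : ℕ)
    (hL1 : lenPrev a n k + 1 ≤ L)
    (hL2 : L + lenPrev a n (k - 1) ≤ 2 * lenPrev a n k)
    (hmem : a (k - 1) ∈ Ak a (k + 1)) :
    (L + lenPrev a n k + 1 ≤ (ToeplitzBlock a n k).length →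
      ((Ak a k).ncard : ℤ) ≤ (cmpl a n (L + 1) : ℤ) - (cmpl a n L : ℤ)) ∧
    ((Ak a (k + 1)).ncard : ℤ) ≤ (cmpl a n (L + 1) : ℤ) - (cmpl a n L : ℤ) := by
  obtain ⟨k, rfl⟩ := Nat.exists_eq_add_of_le' hk
  exact stmt4_general (Set.toFinite _) hn (ha k) hL1 hL2 hmem
end

section
/- For every k ≥ 0 the complexity function satisfies the lower bound C(|p_k| + 1) ≥ (#A_k − 1)·(|p_k| + 1) + 𝟙_{A_{k+1}}(a_k)·(|p_{k−1}| + 1). -/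
open Filter

/-!
The rotations of `p_k b` with `b ∈ A_{k+1}` are words of length `|p_k| + 1` in the language, since
`p_k b p_k` is. Rotations of `p_k b` and `p_k c` with `b ≠ c` differ in their letter counts, so it
suffices to count the rotations of each `p_k b`.

With `p_{-1}` empty, `p_k a_k = (p_{k-1} a_k)^{n_k}` is a proper power. Changing a single letter of
a proper power yields a primitive word, so for `b ≠ a_k` the word `p_k b` has `|p_k| + 1` distinct
rotations. For the same reason `p_{k-1} a_k` is primitive, as `a_k ≠ a_{k-1}`, so its power
`p_k a_k` has at least `|p_{k-1}| + 1` distinct rotations.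
-/

section Words

variable {A : Type*}

/-- A word is primitive if no nontrivial rotation fixes it; for nonempty words this is equivalent
to not being a proper power. -/
def PrimitiveWord (w : List A) : Prop :=
  ∀ r < w.length, w.rotate r = w → r = 0

open Classical in
/-- The conjugacy class of a word: the set of its rotations. -/
noncomputable def conjugates (w : List A) : Finset (List A) :=
  w.cyclicPermutations.toFinset

theorem mem_conjugates {u w : List A} : u ∈ conjugates w ↔ u ~r w := by
  classical
  rw [conjugates, List.mem_toFinset, List.mem_cyclicPermutations_iff]

theorem PrimitiveWord.nodup_cyclicPermutations {w : List A} (hw : PrimitiveWord w) :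
    w.cyclicPermutations.Nodup := by
  rcases eq_or_ne w [] with rfl | hne
  · simp
  have eq_of_rotate_eq {i j : ℕ} (hj : j < w.length) (hij : i ≤ j)
      (h : w.rotate i = w.rotate j) : i = j := by
    have hfix : w.rotate (j - i) = w :=
      List.rotate_injective i <| by
        simp only [List.rotate_rotate, Nat.sub_add_cancel hij, h]
    have := hw (j - i) (by omega) hfix
    omega
  rw [List.nodup_iff_injective_get]
  intro i j h
  simp only [List.get_cyclicPermutations] at h
  have hlen := List.length_cyclicPermutations_of_ne_nil w hne
  rcases le_total i.val j.val with hij | hij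
  · exact Fin.ext (eq_of_rotate_eq (hlen ▸ j.isLt) hij h)
  · exact Fin.ext (eq_of_rotate_eq (hlen ▸ i.isLt) hij h.symm).symm

theorem PrimitiveWord.card_conjugates {w : List A} (hw : PrimitiveWord w) (hne : w ≠ []) :
    (conjugates w).card = w.length := by
  classical
  rw [conjugates, List.toFinset_card_of_nodup hw.nodup_cyclicPermutations,
    List.length_cyclicPermutations_of_ne_nil w hne]

theorem primitiveWord_singleton (b : A) : PrimitiveWord [b] :=
  fun _ hr _ ↦ Nat.lt_one_iff.1 hr

theorem rotate_ofFn {N : ℕ} (f : Fin (N + 1) → A) (r : ℕ) :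
    (List.ofFn f).rotate r = List.ofFn fun i ↦ f (i + Fin.ofNat (N + 1) r) := by
  refine List.ext_getElem (by simp) fun i hi _ ↦ ?_
  simp only [List.getElem_rotate, List.getElem_ofFn, List.length_ofFn]
  congr 1
  exact Fin.ext (by simp [Fin.val_add])

theorem primitiveWord_ofFn_iff {N : ℕ} (f : Fin (N + 1) → A) :
    PrimitiveWord (List.ofFn f) ↔ ∀ c, Function.Periodic f c → c = 0 := by
  simp only [PrimitiveWord, rotate_ofFn, List.ofFn_inj, funext_iff, List.length_ofFn]
  constructor
  · intro h c hc
    refine Fin.ext (h c c.isLt fun i ↦ ?_)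
    simpa using hc i
  · intro h r hr hper
    have := congrArg Fin.val (h (Fin.ofNat (N + 1) r) hper)
    simpa [Nat.mod_eq_of_lt hr] using this

theorem eq_zero_of_periodic_update {G : Type*} [AddCommGroup G] [DecidableEq G] {f : G → A}
    {c r x : G} {b : A} (hf : Function.Periodic f c) (hc : c ≠ 0) (hb : b ≠ f x)
    (hr : Function.Periodic (Function.update f x b) r) : r = 0 := by
  -- `update f x b` and `f` agree off `x`; following `x - c` to `x + r - c` by the period `r`, and
  -- `x + r` to `x + r - c` by the period `c`, identifies `f x` with `b`.
  by_contra hr0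
  set g := Function.update f x b
  have hgf {y : G} (hy : y ≠ x) : g y = f y := Function.update_of_ne hy b f
  have hgx : g x = b := Function.update_self x b f
  have hxc : g (x - c) = f x := by
    rw [hgf (by simpa using hc), hf.sub_eq]
  have hxr : f (x + r) = b := by
    rw [← hgf (by simpa using hr0), hr, hgx]
  have hxrc : g (x + r - c) = f x := by
    rw [add_sub_right_comm, hr, hxc]
  rcases eq_or_ne (x + r - c) x with h | h
  · exact hb (by rw [← hxrc, h, hgx])
  · exact hb (by rw [← hxrc, hgf h, hf.sub_eq, hxr])

theorem append_singleton_eq_ofFn_snoc (p : List A) (b : A) :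
    p ++ [b] = List.ofFn (Fin.snoc p.get b : Fin (p.length + 1) → A) := by
  rw [List.ofFn_succ']
  simp only [Fin.snoc_castSucc, Fin.snoc_last, List.ofFn_get, List.concat_eq_append]

theorem primitiveWord_append_singleton_of_ne {p : List A} {b c : A} (hbc : b ≠ c)
    (hc : ¬ PrimitiveWord (p ++ [c])) : PrimitiveWord (p ++ [b]) := by
  rw [append_singleton_eq_ofFn_snoc, primitiveWord_ofFn_iff] at hc ⊢
  push Not at hc
  obtain ⟨s, hs, hs0⟩ := hc
  intro r hr
  rw [← Fin.update_snoc_last (x := c)] at hr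
  exact eq_zero_of_periodic_update hs hs0 (by simpa using hbc) hr

theorem flatten_replicate_append_append (x y : List A) (m : ℕ) :
    (List.replicate m (x ++ y)).flatten ++ x = x ++ (List.replicate m (y ++ x)).flatten := by
  induction m with
  | zero => simp
  | succ m ih => simp [List.replicate_succ, ih]

theorem rotate_one_flatten_replicate (m : ℕ) (w : List A) :
    (List.replicate m w).flatten.rotate 1 = (List.replicate m (w.rotate 1)).flatten := by
  cases m with
  | zero => simp
  | succ m =>
    cases w with
    | nil => simp
    | cons x u =>
      simpa [List.replicate_succ] using congrArg (u ++ ·) (flatten_replicate_append_append [x] u m)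

theorem rotate_flatten_replicate (m : ℕ) (w : List A) (r : ℕ) :
    (List.replicate m w).flatten.rotate r = (List.replicate m (w.rotate r)).flatten := by
  induction r with
  | zero => simp only [List.rotate_zero]
  | succ r ih =>
    rw [← List.rotate_rotate, ih, rotate_one_flatten_replicate, List.rotate_rotate]

theorem not_primitiveWord_flatten_replicate {m : ℕ} (hm : 2 ≤ m) {w : List A} (hw : w ≠ []) :
    ¬ PrimitiveWord (List.replicate m w).flatten := by
  have hpos := List.length_pos_iff.2 hw
  intro h
  refine hpos.ne' (h w.length ?_ ?_)
  · simpa using lt_mul_of_one_lt_left hpos hm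
  · rw [rotate_flatten_replicate, List.rotate_length]

theorem card_conjugates_le_card_conjugates_flatten_replicate {m : ℕ} (hm : m ≠ 0) (w : List A) :
    (conjugates w).card ≤ (conjugates (List.replicate m w).flatten).card := by
  refine Finset.card_le_card_of_injOn (fun u ↦ (List.replicate m u).flatten) ?_ ?_
  · intro u hu
    obtain ⟨r, rfl⟩ := mem_conjugates.1 hu
    exact mem_conjugates.2 ⟨r, rotate_flatten_replicate m u r⟩
  · intro u hu v hv huv
    obtain ⟨m, rfl⟩ := Nat.exists_eq_succ_of_ne_zero hm
    have hlen : u.length = v.length :=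
      (mem_conjugates.1 hu).perm.length_eq.trans (mem_conjugates.1 hv).perm.length_eq.symm
    simp only [List.replicate_succ, List.flatten_cons] at huv
    exact List.append_inj_left huv hlen

theorem disjoint_conjugates_append_singleton (p : List A) {b c : A} (hbc : b ≠ c) :
    Disjoint (conjugates (p ++ [b])) (conjugates (p ++ [c])) := by
  refine Finset.disjoint_left.2 fun u hb hc ↦ hbc ?_
  have hperm : (p ++ [b]).Perm (p ++ [c]) :=
    (mem_conjugates.1 hb).perm.symm.trans (mem_conjugates.1 hc).perm
  simpa using (List.perm_append_left_iff p).1 hperm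

theorem infix_of_isRotated_append_singleton {p u : List A} {b : A} (h : u ~r p ++ [b]) :
    u <:+: p ++ b :: p := by
  obtain ⟨r, rfl⟩ := h.symm
  have hr : r % (p ++ [b]).length ≤ p.length :=
    Nat.le_of_lt_succ <| (Nat.mod_lt r (by simp)).trans_eq (by simp)
  rw [← List.rotate_mod]
  generalize r % (p ++ [b]).length = s at hr
  obtain ⟨x, y, rfl, rfl⟩ : ∃ x y, p = x ++ y ∧ s = x.length :=
    ⟨p.take s, p.drop s, (List.take_append_drop s p).symm, (List.length_take_of_le hr).symm⟩
  rw [List.append_assoc, List.rotate_append_length_eq]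
  exact ⟨x, y, by simp⟩

theorem intercalate_replicate_append (s q : List A) {m : ℕ} (hm : m ≠ 0) :
    s.intercalate (List.replicate m q) ++ s = (List.replicate m (q ++ s)).flatten := by
  obtain ⟨m, rfl⟩ := Nat.exists_eq_succ_of_ne_zero hm
  clear hm
  induction m with
  | zero => simp
  | succ m ih =>
    rw [List.replicate_succ, List.intercalate_cons_of_ne_nil (by simp), List.append_assoc, ih,
      List.replicate_succ (n := m + 1), List.flatten_cons]

end Words

section Blocks

variable {A : Type*} {a : ℕ → A} {n : ℕ → ℕ} {k : ℕ}

/-- The block `p (k-1)`, with `p (-1)` the empty word. -/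
def prevBlock (a : ℕ → A) (n : ℕ → ℕ) : ℕ → List A
  | 0 => []
  | k + 1 => ToeplitzBlock a n k

theorem length_prevBlock : (prevBlock a n k).length = lenPrev a n k := by
  cases k <;> rfl

theorem toeplitzBlock_append_singleton (hk : n k ≠ 0) :
    ToeplitzBlock a n k ++ [a k] =
      (List.replicate (n k) (prevBlock a n k ++ [a k])).flatten := by
  cases k with
  | zero =>
    rw [ToeplitzBlock, prevBlock, ← List.replicate_succ',
      Nat.sub_add_cancel (Nat.pos_of_ne_zero hk), List.nil_append, List.flatten_replicate_singleton]
  | succ k => exact intercalate_replicate_append _ _ hk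

theorem primitiveWord_toeplitzBlock_append_singleton (hk : 2 ≤ n k) {b : A} (hb : b ≠ a k) :
    PrimitiveWord (ToeplitzBlock a n k ++ [b]) := by
  refine primitiveWord_append_singleton_of_ne hb ?_
  rw [toeplitzBlock_append_singleton (by omega)]
  exact not_primitiveWord_flatten_replicate hk (by simp)

theorem primitiveWord_prevBlock_append_singleton
    (hk : ∀ j, j + 1 = k → 2 ≤ n j ∧ a j ≠ a k) : PrimitiveWord (prevBlock a n k ++ [a k]) := by
  cases k with
  | zero => exact primitiveWord_singleton (a 0)
  | succ j =>
    obtain ⟨hn, ha⟩ := hk j rfl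
    exact primitiveWord_toeplitzBlock_append_singleton hn ha.symm

theorem card_conjugates_toeplitzBlock_append_singleton (hk : 2 ≤ n k) {b : A} (hb : b ≠ a k) :
    (conjugates (ToeplitzBlock a n k ++ [b])).card = (ToeplitzBlock a n k).length + 1 := by
  rw [(primitiveWord_toeplitzBlock_append_singleton hk hb).card_conjugates (by simp),
    List.length_append, List.length_singleton]

theorem lenPrev_add_one_le_card_conjugates (hnk : n k ≠ 0)
    (hk : ∀ j, j + 1 = k → 2 ≤ n j ∧ a j ≠ a k) :
    lenPrev a n k + 1 ≤ (conjugates (ToeplitzBlock a n k ++ [a k])).card := by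
  calc lenPrev a n k + 1 = (prevBlock a n k ++ [a k]).length := by simp [length_prevBlock]
    _ = (conjugates (prevBlock a n k ++ [a k])).card :=
      ((primitiveWord_prevBlock_append_singleton hk).card_conjugates (by simp)).symm
    _ ≤ _ := by
      rw [toeplitzBlock_append_singleton hnk]
      exact card_conjugates_le_card_conjugates_flatten_replicate hnk _

theorem card_erase_mul_add_le_sum_card_conjugates [DecidableEq A] (hnk : 2 ≤ n k)
    (hk : ∀ j, j + 1 = k → 2 ≤ n j ∧ a j ≠ a k) (B : Finset A) :
    (B.erase (a k)).card * ((ToeplitzBlock a n k).length + 1) +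
        (if a k ∈ B then 1 else 0) * (lenPrev a n k + 1) ≤
      ∑ b ∈ B, (conjugates (ToeplitzBlock a n k ++ [b])).card := by
  have herase : ∑ b ∈ B.erase (a k), (conjugates (ToeplitzBlock a n k ++ [b])).card =
      (B.erase (a k)).card * ((ToeplitzBlock a n k).length + 1) :=
    Finset.sum_const_nat fun b hb ↦
      card_conjugates_toeplitzBlock_append_singleton hnk (Finset.ne_of_mem_erase hb)
  rw [← herase]
  split_ifs with hmem
  · rw [one_mul, ← Finset.sum_erase_add _ _ hmem]
    exact Nat.add_le_add_left
      (lenPrev_add_one_le_card_conjugates (two_pos.trans_le hnk).ne' hk) _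
  · rw [zero_mul, add_zero, Finset.erase_eq_of_notMem hmem]

theorem toeplitzBlock_append_cons_prefix_succ (hk : 2 ≤ n (k + 1)) :
    ToeplitzBlock a n k ++ a (k + 1) :: ToeplitzBlock a n k <+: ToeplitzBlock a n (k + 1) := by
  obtain ⟨m, hm⟩ := Nat.exists_eq_add_of_le' hk
  rw [ToeplitzBlock, hm]
  cases m <;> simp [List.replicate_succ]

theorem toeplitzBlock_suffix_succ (hk : n (k + 1) ≠ 0) :
    ToeplitzBlock a n k <:+ ToeplitzBlock a n (k + 1) := by
  have h := toeplitzBlock_append_singleton (a := a) hk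
  obtain ⟨m, hm⟩ := Nat.exists_eq_succ_of_ne_zero hk
  rw [hm, List.replicate_succ', List.flatten_concat, ← List.append_assoc] at h
  exact ⟨_, (List.append_cancel_right h).symm⟩

theorem toeplitzBlock_prefix_of_le (hn : ∀ k, 2 ≤ n k) {j : ℕ} (hkj : k ≤ j) :
    ToeplitzBlock a n k <+: ToeplitzBlock a n j := by
  induction j, hkj using Nat.le_induction with
  | base => exact List.prefix_rfl
  | succ j _ ih =>
    exact ih.trans <|
      (List.prefix_append _ _).trans (toeplitzBlock_append_cons_prefix_succ (hn (j + 1)))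

theorem toeplitzBlock_suffix_of_le (hn : ∀ k, 2 ≤ n k) {j : ℕ} (hkj : k ≤ j) :
    ToeplitzBlock a n k <:+ ToeplitzBlock a n j := by
  induction j, hkj using Nat.le_induction with
  | base => exact List.suffix_rfl
  | succ j _ ih =>
    exact ih.trans (toeplitzBlock_suffix_succ (two_pos.trans_le (hn (j + 1))).ne')

theorem toeplitzBlock_append_cons_mem_toeplitzLang (hn : ∀ k, 2 ≤ n k) {b : A}
    (hb : b ∈ Ak a (k + 1)) :
    ToeplitzBlock a n k ++ b :: ToeplitzBlock a n k ∈ ToeplitzLang a n := by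
  obtain ⟨i, hi, rfl⟩ := hb
  obtain ⟨j, rfl⟩ := Nat.exists_eq_add_of_le' (Nat.one_le_of_lt hi)
  have hkj : k ≤ j := Nat.le_of_succ_le_succ hi
  obtain ⟨s, hs⟩ := toeplitzBlock_suffix_of_le (a := a) hn hkj
  obtain ⟨t, ht⟩ := toeplitzBlock_prefix_of_le (a := a) hn hkj
  have hinfix : ToeplitzBlock a n k ++ a (j + 1) :: ToeplitzBlock a n k <:+:
      ToeplitzBlock a n j ++ a (j + 1) :: ToeplitzBlock a n j :=
    ⟨s, t, by nth_rw 1 [← hs]; rw [← ht]; simp⟩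
  exact ⟨j + 1, hinfix.trans (toeplitzBlock_append_cons_prefix_succ (hn (j + 1))).isInfix⟩

theorem mem_range_of_mem_toeplitzBlock (hn : ∀ k, n k ≠ 0) {x : A} (hx : x ∈ ToeplitzBlock a n k) :
    x ∈ Set.range a := by
  induction k with
  | zero => exact ⟨0, (List.eq_of_mem_replicate hx).symm⟩
  | succ k ih =>
    have hx' := List.mem_append_left [a (k + 1)] hx
    rw [toeplitzBlock_append_singleton (hn (k + 1))] at hx'
    obtain ⟨w, hw, hxw⟩ := List.mem_flatten.1 hx'
    rw [List.eq_of_mem_replicate hw] at hxw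
    rcases List.mem_append.1 hxw with hxk | hxa
    · exact ih hxk
    · exact ⟨k + 1, (List.mem_singleton.1 hxa).symm⟩

theorem finite_setOf_mem_toeplitzLang_length_eq (hn : ∀ k, n k ≠ 0) (ha : (Set.range a).Finite)
    (L : ℕ) :
    {u | u ∈ ToeplitzLang a n ∧ u.length = L}.Finite := by
  have := ha.to_subtype
  refine ((List.finite_length_eq (Set.range a) L).image (List.map Subtype.val)).subset ?_
  rintro u ⟨⟨k, hu⟩, hL⟩
  lift u to List (Set.range a) using fun x hx ↦ mem_range_of_mem_toeplitzBlock hn (hu.subset hx)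
  exact ⟨u, by simpa using hL, rfl⟩

theorem sum_card_conjugates_le_cmpl (hn : ∀ k, 2 ≤ n k) (ha : (Set.range a).Finite) {B : Finset A}
    (hB : ∀ b ∈ B, b ∈ Ak a (k + 1)) :
    ∑ b ∈ B, (conjugates (ToeplitzBlock a n k ++ [b])).card ≤
      cmpl a n ((ToeplitzBlock a n k).length + 1) := by
  classical
  rw [← Finset.card_biUnion fun b _ c _ ↦ disjoint_conjugates_append_singleton _,
    ← Set.ncard_coe_finset]
  refine Set.ncard_le_ncard ?_
    (finite_setOf_mem_toeplitzLang_length_eq (fun k ↦ (two_pos.trans_le (hn k)).ne') ha _)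
  intro u hu
  obtain ⟨b, hb, hub⟩ := Finset.mem_biUnion.1 hu
  have hrot := mem_conjugates.1 hub
  obtain ⟨j, hj⟩ := toeplitzBlock_append_cons_mem_toeplitzLang hn (hB b hb)
  exact ⟨⟨j, (infix_of_isRotated_append_singleton hrot).trans hj⟩,
    by simpa using hrot.perm.length_eq⟩

theorem Ak_eq_insert (a : ℕ → A) (k : ℕ) : Ak a k = insert (a k) (Ak a (k + 1)) := by
  ext x
  constructor
  · rintro ⟨j, hj, rfl⟩
    rcases hj.eq_or_lt with rfl | hlt
    · exact Set.mem_insert _ _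
    · exact Set.mem_insert_of_mem _ ⟨j, hlt, rfl⟩
  · rintro (rfl | ⟨j, hj, rfl⟩)
    · exact ⟨k, le_rfl, rfl⟩
    · exact ⟨j, (Nat.le_succ k).trans hj, rfl⟩

end Blocks

open Classical in
theorem stmt5_general {A : Type*} (a : ℕ → A) (n : ℕ → ℕ) (hn : ∀ k, 2 ≤ n k)
    (hfin : (Set.range a).Finite) (k : ℕ) (ha : ∀ j, j + 1 = k → a j ≠ a k) :
    (((Ak a k).ncard : ℤ) - 1) * (((ToeplitzBlock a n k).length : ℤ) + 1) +
        (if a k ∈ Ak a (k + 1) then 1 else 0) * ((lenPrev a n k : ℤ) + 1) ≤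
      (cmpl a n ((ToeplitzBlock a n k).length + 1) : ℤ) := by
  have hAfin : (Ak a (k + 1)).Finite := hfin.subset fun _ ⟨j, _, hj⟩ ↦ ⟨j, hj⟩
  lift Ak a (k + 1) to Finset A using hAfin with B hB
  have hcard : (Ak a k).ncard = (B.erase (a k)).card + 1 := by
    rw [Ak_eq_insert, ← hB, ← Finset.coe_insert, Set.ncard_coe_finset,
      ← Finset.card_erase_add_one (Finset.mem_insert_self _ _), Finset.erase_insert_eq_erase]
  have hlower := card_erase_mul_add_le_sum_card_conjugates (hn k)
    (fun j hj ↦ ⟨hn j, ha j hj⟩) B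
  have hupper := sum_card_conjugates_le_cmpl hn hfin (B := B) fun b hb ↦ hB ▸ Finset.mem_coe.2 hb
  rw [hcard, Nat.cast_succ, add_sub_cancel_right]
  simp only [Finset.mem_coe]
  exact_mod_cast hlower.trans hupper

/- STATEMENT 5: lower bound for the complexity at word length `|p k| + 1`. -/
open Classical in
theorem stmt5 {A : Type*} [Fintype A] [Nonempty A]
    (a : ℕ → A) (n : ℕ → ℕ) (hn : ∀ k, 2 ≤ n k) (ha : ∀ k, a k ≠ a (k + 1))
    (hAev : 2 ≤ (Aev a).ncard) (k : ℕ) :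
    (((Ak a k).ncard : ℤ) - 1) * (((ToeplitzBlock a n k).length : ℤ) + 1) +
        (if a k ∈ Ak a (k + 1) then 1 else 0) * ((lenPrev a n k : ℤ) + 1) ≤
      (cmpl a n ((ToeplitzBlock a n k).length + 1) : ℤ) := by
  exact stmt5_general a n hn (Set.toFinite _) k fun j hj ↦ hj ▸ ha j
end
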